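/- Let 0 < α < ν. Then the sequence {J_ν(x j_{n,α})}_{n≥1}, where j_{n,α} is the n-th positive zero of the Bessel function J_α, is complete in L^1(0,1): if y ∈ L^1(0,1) and ∫_0^1 y(x) J_ν(x j_{n,α}) dx = 0 for all n ≥ 1, then y = 0 a.e. -/

import Mathlib

open MeasureTheory Set

/-- The classical Bessel function of the first kind of order `ν`, defined by its power
series (for positive arguments, via real powers). -/
noncomputable def besselJ (ν x : ℝ) : ℝ :=
  ∑' n : ℕ, (-1 : ℝ) ^ n / (n.factorial * Real.Gamma (ν + n + 1)) * (x / 2) ^ (ν + 2 * (n : ℝ))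

/-!
Write `J_a(x) = (x / 2)ᵃ C_a(-(x / 2)²)` with `C_a` entire. Put `F(w) = ∫₀¹ y(x) x^ν C_ν(x² w) dx`;
the hypothesis says that `F` vanishes at the zeros of `C_α`. These zeros are simple and negative, so
`F = G C_α` with `G` entire.

Off the real axis, Bessel's differential equation gives a monotone energy which bounds `C_{α+1}(w)`,
and then `C_α(s² w)` for `0 < s ≤ 1`, by a multiple of `C_α(w)`. Sonine's integral, which averages
`C_α(r w)` against a beta weight to produce `C_ν(w)`, turns this into
`|Im w| ‖F(w)‖ ≤ M (1 + ‖w‖)² ‖C_α(w)‖`. The factor `|Im w|` is removed by the maximum principle,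
and Liouville's theorem leaves `G(w) = c₀ + c₁ w`.

The `k`-th Taylor coefficient of `F` is that of `C_ν` times the moment `∫₀¹ y(x) x^(ν + 2k) dx`.
The moments tend to `0`, while the Taylor coefficients of `C_ν` are eventually dominated by those of
`C_α`; comparing with `(c₀ + c₁ w) C_α(w)` forces `c₁ = 0` and then `c₀ = 0`. So all moments vanish,
and `y = 0` by the Weierstrass approximation theorem.
-/

open Complex Filter
open scoped ComplexConjugate Nat Topology

section EntireSeries

/-- `f` is the sum, on all of `ℂ`, of the power series with coefficients `c`. -/
def HasEntireSeries (f : ℂ → ℂ) (c : ℕ → ℂ) : Prop :=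
  ∀ w, HasSum (fun k => c k * w ^ k) (f w)

namespace HasEntireSeries

variable {f g : ℂ → ℂ} {c d : ℕ → ℂ}

lemma hasFPowerSeriesOnBall (h : HasEntireSeries f c) :
    HasFPowerSeriesOnBall f (.ofScalars ℂ c) 0 ⊤ where
  r_le := by
    refine top_le_iff.2 <| (FormalMultilinearSeries.ofScalars ℂ c).radius_eq_top_of_summable_norm
      fun r => ?_
    simpa [FormalMultilinearSeries.ofScalars_norm] using (h r).summable.norm
  r_pos := ENNReal.coe_lt_top
  hasSum {w} _ := by
    simpa [FormalMultilinearSeries.ofScalars_apply_eq, mul_comm] using h w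

lemma differentiable (h : HasEntireSeries f c) : Differentiable ℂ f :=
  differentiableOn_univ.1 <| by simpa using h.hasFPowerSeriesOnBall.differentiableOn

lemma coeff_unique (h : HasEntireSeries f c) (h' : HasEntireSeries f d) : c = d :=
  FormalMultilinearSeries.ofScalars_series_injective ℂ ℂ <|
    h.hasFPowerSeriesOnBall.hasFPowerSeriesAt.eq_formalMultilinearSeries
      h'.hasFPowerSeriesOnBall.hasFPowerSeriesAt

lemma of_differentiable (hf : Differentiable ℂ f) :
    HasEntireSeries f fun k => iteratedDeriv k f 0 / k ! := fun w => by
  simpa [div_eq_inv_mul, mul_assoc, mul_comm, mul_left_comm]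
    using hasSum_taylorSeries_of_entire hf 0 w

lemma apply_zero (h : HasEntireSeries f c) : f 0 = c 0 :=
  (h 0).unique <| by
    simpa using hasSum_single (f := fun k => c k * (0 : ℂ) ^ k) 0 fun k hk => by simp [hk]

lemma iteratedDeriv_zero (h : HasEntireSeries f c) (k : ℕ) : iteratedDeriv k f 0 = k ! * c k := by
  rw [h.coeff_unique (of_differentiable h.differentiable)]
  exact (mul_div_cancel₀ _ (mod_cast k.factorial_ne_zero)).symm

lemma deriv (h : HasEntireSeries f c) :
    HasEntireSeries (deriv f) fun k => (k + 1) * c (k + 1) := by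
  convert! of_differentiable h.differentiable.deriv using 2 with k
  rw [← iteratedDeriv_succ', h.iteratedDeriv_zero, Nat.factorial_succ,
    eq_div_iff (mod_cast k.factorial_ne_zero)]
  push_cast
  ring

lemma add (hf : HasEntireSeries f c) (hg : HasEntireSeries g d) :
    HasEntireSeries (fun w => f w + g w) fun k => c k + d k := fun w => by
  simpa only [add_mul] using (hf w).add (hg w)

lemma const_mul (b : ℂ) (hf : HasEntireSeries f c) :
    HasEntireSeries (fun w => b * f w) fun k => b * c k := fun w => by
  simpa only [mul_assoc] using (hf w).mul_left b

lemma id_mul (hf : HasEntireSeries f c) :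
    HasEntireSeries (fun w => w * f w) fun k => k.casesOn 0 c := fun w => by
  rw [hasSum_nat_add_iff' 1 |>.symm]
  simpa [pow_succ', mul_left_comm] using (hf w).mul_left w

variable {W : ℝ → ℂ} {ρ : ℝ → ℝ} {s : Set ℝ}

lemma integral_comp_mul (hf : HasEntireSeries f c) (hs : MeasurableSet s) (hW : IntegrableOn W s)
    (hρ : Continuous ρ) (hρ1 : ∀ r ∈ s, |ρ r| ≤ 1) :
    HasEntireSeries (fun w => ∫ r in s, W r * f (ρ r * w))
      fun k => c k * ∫ r in s, W r * ρ r ^ k := fun w => by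
  have hle (k : ℕ) : ∀ r ∈ s, ‖(ρ r : ℂ) ^ k‖ ≤ 1 := fun r hr => by
    simpa using pow_le_one₀ (abs_nonneg _) (hρ1 r hr)
  have hint (k : ℕ) : IntegrableOn (fun r => W r * ρ r ^ k) s :=
    hW.mul_bdd (c := 1) (by fun_prop) (ae_restrict_of_forall_mem hs (hle k))
  have hbound (k : ℕ) : ∫ r in s, ‖W r * ρ r ^ k‖ ≤ ∫ r in s, ‖W r‖ := by
    refine setIntegral_mono_on (hint k).norm hW.norm hs fun r hr => ?_
    simpa using mul_le_mul_of_nonneg_left (hle k r hr) (norm_nonneg (W r))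
  have hsum := hasSum_integral_of_summable_integral_norm (μ := volume.restrict s)
    (F := fun k r => c k * w ^ k * (W r * ρ r ^ k)) (fun k => (hint k).const_mul _) <| by
      simp only [norm_mul (c _ * w ^ _), integral_const_mul]
      refine .of_nonneg_of_le (fun k => by positivity) (fun k => ?_)
        ((hf w).summable.norm.mul_right (∫ r in s, ‖W r‖))
      exact mul_le_mul_of_nonneg_left (hbound k) (norm_nonneg _)
  convert! hsum using 1
  · ext k
    rw [integral_const_mul]
    ring
  · refine integral_congr_ae (.of_forall fun r => ?_)
    dsimp only
    rw [← (hf (ρ r * w)).tsum_eq, ← tsum_mul_left]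
    congr 1 with k
    ring

end HasEntireSeries

end EntireSeries

section BesselClifford

/-- The coefficients of the power series of `besselClifford a`. -/
noncomputable def besselCliffordCoeff (a : ℝ) (k : ℕ) : ℝ :=
  (k ! * Real.Gamma (a + k + 1))⁻¹

/-- The Bessel–Clifford function `w ↦ ∑ wᵏ / (k! Γ(a + k + 1))`: the entire function for which
`J_a(x) = (x / 2)ᵃ C_a(-(x / 2)²)`. -/
noncomputable def besselClifford (a : ℝ) : ℂ → ℂ :=
  regularizedHGFun 0 {(a : ℂ) + 1}

variable {a b : ℝ} {k : ℕ} {w : ℂ}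

lemma besselCliffordCoeff_pos (ha : -1 < a) : 0 < besselCliffordCoeff a k := by
  have : 0 < a + k + 1 := by linarith [k.cast_nonneg (α := ℝ)]
  have := Real.Gamma_pos_of_pos this
  unfold besselCliffordCoeff
  positivity

lemma besselCliffordCoeff_add_one_order (a : ℝ) (k : ℕ) :
    (a + k + 1) * besselCliffordCoeff (a + 1) k = besselCliffordCoeff a k := by
  rcases eq_or_ne (a + k + 1) 0 with h | h
  · simp [besselCliffordCoeff, h]
  · rw [besselCliffordCoeff, besselCliffordCoeff, add_right_comm a 1, Real.Gamma_add_one h]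
    field_simp

lemma add_one_mul_besselCliffordCoeff_add_one (a : ℝ) (k : ℕ) :
    (k + 1) * besselCliffordCoeff a (k + 1) = besselCliffordCoeff (a + 1) k := by
  have : a + (k + 1) + 1 = a + 1 + k + 1 := by ring
  simp only [besselCliffordCoeff, Nat.factorial_succ, Nat.cast_mul, Nat.cast_succ, this]
  field_simp

lemma besselCliffordCoeff_eventually_le (hab : a ≤ b) :
    ∀ᶠ k in atTop, besselCliffordCoeff b k ≤ besselCliffordCoeff a k := by
  filter_upwards [tendsto_natCast_atTop_atTop.eventually_ge_atTop (1 - a)] with k hk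
  have hmono : Real.Gamma (a + k + 1) ≤ Real.Gamma (b + k + 1) :=
    Real.Gamma_strictMonoOn_Ici.monotoneOn (by grind) (by grind) (by linarith)
  have : 0 < Real.Gamma (a + k + 1) := Real.Gamma_pos_of_pos (by linarith)
  unfold besselCliffordCoeff
  gcongr

lemma hasEntireSeries_besselClifford (a : ℝ) :
    HasEntireSeries (besselClifford a) fun k => (besselCliffordCoeff a k : ℂ) := fun w => by
  have hr := radius_regularizedHGFunSeries_eq_top (a := 0) (b := {(a : ℂ) + 1}) (by simp)
  have := ((regularizedHGFunSeries 0 {(a : ℂ) + 1}).hasFPowerSeriesOnBall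
    (by simp [hr])).hasSum (y := w) (by simp [hr])
  rw [zero_add] at this
  convert! this using 2 with k
  simp [besselCliffordCoeff, regularizedHGFunSeries, regularizedHGFunCoeff, ← Complex.Gamma_ofReal,
    add_right_comm, mul_comm]

lemma differentiable_besselClifford (a : ℝ) : Differentiable ℂ (besselClifford a) :=
  (hasEntireSeries_besselClifford a).differentiable

lemma deriv_besselClifford (a : ℝ) : deriv (besselClifford a) = besselClifford (a + 1) := by
  ext w
  refine ((hasEntireSeries_besselClifford a).deriv w).unique ?_
  convert! hasEntireSeries_besselClifford (a + 1) w using 3 with k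
  simp only [← add_one_mul_besselCliffordCoeff_add_one a k]
  norm_cast

lemma hasDerivAt_besselClifford (a : ℝ) (w : ℂ) :
    HasDerivAt (besselClifford a) (besselClifford (a + 1) w) w :=
  deriv_besselClifford a ▸ (differentiable_besselClifford a w).hasDerivAt

lemma iteratedDeriv_besselClifford (n : ℕ) (a : ℝ) :
    iteratedDeriv n (besselClifford a) = besselClifford (a + n) := by
  induction n generalizing a with
  | zero => simp
  | succ n ih => rw [iteratedDeriv_succ', deriv_besselClifford, ih]; push_cast; ring_nf

lemma besselClifford_recurrence (a : ℝ) (w : ℂ) :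
    w * besselClifford (a + 2) w + (a + 1) * besselClifford (a + 1) w = besselClifford a w := by
  refine ((hasEntireSeries_besselClifford (a + 2)).id_mul.add
    ((hasEntireSeries_besselClifford (a + 1)).const_mul (a + 1)) w).unique ?_
  convert! hasEntireSeries_besselClifford a w using 3 with k
  simp only [← besselCliffordCoeff_add_one_order a k]
  cases k with
  | zero => simp
  | succ k =>
    have hk := add_one_mul_besselCliffordCoeff_add_one (a + 1) k
    rw [add_assoc a, one_add_one_eq_two] at hk
    simp only [← hk]
    push_cast
    ring

lemma besselClifford_zero_ne_zero (ha : -1 < a) : besselClifford a 0 ≠ 0 := by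
  rw [(hasEntireSeries_besselClifford a).apply_zero]
  exact mod_cast (besselCliffordCoeff_pos ha).ne'

lemma besselClifford_ofReal_ne_zero (ha : -1 < a) {t : ℝ} (ht : 0 ≤ t) :
    besselClifford a t ≠ 0 := by
  have hsum : HasSum (fun k => besselCliffordCoeff a k * t ^ k) (besselClifford a t).re := by
    simpa only [← ofReal_pow, ← ofReal_mul, ofReal_re]
      using hasSum_re (hasEntireSeries_besselClifford a t)
  have hle := le_hasSum hsum 0 fun k _ =>
    mul_nonneg (besselCliffordCoeff_pos ha).le (pow_nonneg ht k)
  intro h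
  rw [h, pow_zero, mul_one, zero_re] at hle
  exact hle.not_gt (besselCliffordCoeff_pos ha)

-- By the recurrence, a common zero of `C_a` and `C_{a+1}` is a zero of all derivatives of `C_a`.
lemma besselClifford_add_one_ne_zero (ha : -1 < a) (h : besselClifford a w = 0) :
    besselClifford (a + 1) w ≠ 0 := fun h' => by
  have hw : w ≠ 0 := by
    rintro rfl
    exact besselClifford_zero_ne_zero ha h
  have hzero (n : ℕ) :
      besselClifford (a + n) w = 0 ∧ besselClifford (a + (n + 1 : ℕ)) w = 0 := by
    induction n with
    | zero => simp [h, h']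
    | succ n ih =>
      refine ⟨ih.2, ?_⟩
      have hrec := besselClifford_recurrence (a + n) w
      push_cast at ih ⊢
      rw [← add_assoc] at ih
      rw [ih.1, ih.2, mul_zero, add_zero, mul_eq_zero] at hrec
      rw [show a + (n + 1 + 1) = a + n + 2 by ring]
      exact hrec.resolve_left hw
  refine besselClifford_zero_ne_zero ha ?_
  rw [← taylorSeries_eq_of_entire' w 0 (differentiable_besselClifford a)]
  simp [iteratedDeriv_besselClifford, hzero]

lemma besselJ_eq_rpow_mul_besselClifford (a : ℝ) {x : ℝ} (hx : 0 < x) :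
    (besselJ a x : ℂ) = ((x / 2) ^ a : ℝ) * besselClifford a (-(x / 2) ^ 2) := by
  rw [besselJ, ofReal_tsum,
    ← ((hasEntireSeries_besselClifford a (-(x / 2) ^ 2)).mul_left _).tsum_eq]
  congr 1 with k
  have hpow : (x / 2) ^ (a + 2 * (k : ℝ)) = (x / 2) ^ a * ((x / 2) ^ 2) ^ k := by
    rw [Real.rpow_add (by positivity), ← pow_mul, ← Real.rpow_natCast]
    norm_cast
  simp only [hpow, neg_pow (((x : ℂ) / 2) ^ 2), besselCliffordCoeff]
  push_cast
  ring

end BesselClifford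

section Energy

variable {a : ℝ} {w : ℂ} {t : ℝ}

/-- The imaginary part of the quadratic form of the Bessel equation along the segment `[0, t w]`,
normalised by `Im w`. It equals `∫ τ in 0..t, τ ^ a * ‖C_a (τ w)‖ ^ 2` and serves to bound
`C_{a+1}` in terms of `C_a` away from the real axis. -/
noncomputable def besselEnergy (a : ℝ) (w : ℂ) (t : ℝ) : ℝ :=
  t ^ (a + 1) * (w * besselClifford (a + 1) (t * w) * conj (besselClifford a (t * w))).im / w.im

lemma hasDerivAt_besselClifford_mul (a : ℝ) (w : ℂ) (t : ℝ) :
    HasDerivAt (fun τ : ℝ => besselClifford a (τ * w)) (w * besselClifford (a + 1) (t * w)) t := by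
  have hline : HasDerivAt (fun τ : ℝ => (τ : ℂ) * w) w t := by
    simpa using (hasDerivAt_id t).ofReal_comp.mul_const w
  simpa [mul_comm] using! (hasDerivAt_besselClifford a (t * w)).comp t hline

lemma hasDerivAt_besselClifford_add_one_mul (a : ℝ) (w : ℂ) (ht : t ≠ 0) :
    HasDerivAt (fun τ : ℝ => besselClifford (a + 1) (τ * w))
      ((besselClifford a (t * w) - (a + 1) * besselClifford (a + 1) (t * w)) / t) t := by
  convert! hasDerivAt_besselClifford_mul (a + 1) w t using 1
  rw [← besselClifford_recurrence a, add_assoc a, one_add_one_eq_two]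
  have : (t : ℂ) ≠ 0 := mod_cast ht
  field_simp
  ring

lemma hasDerivAt_rpow_add_one (a : ℝ) (ht : t ≠ 0) :
    HasDerivAt (fun τ : ℝ => τ ^ (a + 1)) ((a + 1) * t ^ a) t := by
  simpa using Real.hasDerivAt_rpow_const (p := a + 1) (.inl ht)

lemma hasDerivAt_besselEnergy (hw : w.im ≠ 0) (ht : 0 < t) :
    HasDerivAt (besselEnergy a w) (t ^ a * ‖besselClifford a (t * w)‖ ^ 2) t := by
  have hform := imCLM.hasFDerivAt.comp_hasDerivAt t
    (((hasDerivAt_besselClifford_add_one_mul a w ht.ne').const_mul w).mul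
      (hasDerivAt_besselClifford_mul a w t).star)
  refine (((hasDerivAt_rpow_add_one a ht.ne').mul hform).div_const w.im).congr_deriv ?_
  rw [Real.rpow_add_one ht.ne', Complex.sq_norm, normSq_apply]
  simp only [RCLike.star_def, Function.comp_apply, Pi.mul_apply, imCLM_apply, mul_im, mul_re,
    conj_im, mul_neg, conj_re, star_mul', add_im, div_re, sub_re, add_re, ofReal_re, one_re,
    ofReal_im, one_im, add_zero, zero_mul, sub_zero, normSq_ofReal, sub_im, mul_zero, zero_div,
    div_im, neg_mul, neg_neg]
  field_simp
  ring

lemma continuous_besselClifford_mul (a : ℝ) (w : ℂ) :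
    Continuous fun τ : ℝ => besselClifford a (τ * w) :=
  (differentiable_besselClifford a).continuous.comp (by fun_prop)

lemma continuous_besselEnergy (ha : -1 < a) (w : ℂ) : Continuous (besselEnergy a w) := by
  have := continuous_besselClifford_mul a w
  have := continuous_besselClifford_mul (a + 1) w
  have := Real.continuous_rpow_const (q := a + 1) (by linarith)
  unfold besselEnergy
  fun_prop

lemma monotoneOn_Ici_of_hasDerivAt_nonneg {f f' : ℝ → ℝ} (hf : Continuous f)
    (hf' : ∀ t, 0 < t → HasDerivAt f (f' t) t) (hnonneg : ∀ t, 0 < t → 0 ≤ f' t) :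
    MonotoneOn f (Ici 0) := by
  refine monotoneOn_of_deriv_nonneg (convex_Ici 0) hf.continuousOn ?_ ?_ <;>
    simp only [interior_Ici]
  · exact fun t ht => (hf' t ht).differentiableAt.differentiableWithinAt
  · exact fun t ht => (hf' t ht).deriv ▸ hnonneg t ht

lemma monotoneOn_besselEnergy (ha : -1 < a) (hw : w.im ≠ 0) :
    MonotoneOn (besselEnergy a w) (Ici 0) :=
  monotoneOn_Ici_of_hasDerivAt_nonneg (continuous_besselEnergy ha w)
    (fun _ => hasDerivAt_besselEnergy hw) fun _ ht => by positivity

-- The difference of the two sides has derivative `t ^ a * ‖C_a - (a + 1) C_{a+1}‖ ^ 2`.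
lemma rpow_mul_sq_norm_besselClifford_le_besselEnergy (ha : -1 < a) (hw : w.im ≠ 0)
    (ht : 0 ≤ t) :
    (a + 1) * (t ^ (a + 1) * ‖besselClifford (a + 1) (t * w)‖ ^ 2) ≤ besselEnergy a w t := by
  have hderiv (τ : ℝ) (hτ : 0 < τ) : HasDerivAt
      (fun τ => besselEnergy a w τ -
        (a + 1) * (τ ^ (a + 1) * ‖besselClifford (a + 1) (τ * w)‖ ^ 2))
      (τ ^ a * ‖besselClifford a (τ * w) - (a + 1) * besselClifford (a + 1) (τ * w)‖ ^ 2) τ := by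
    refine ((hasDerivAt_besselEnergy hw hτ).sub (((hasDerivAt_rpow_add_one a hτ.ne').mul
      (hasDerivAt_besselClifford_add_one_mul a w hτ.ne').norm_sq).const_mul (a + 1))).congr_deriv ?_
    rw [Real.rpow_add_one hτ.ne']
    simp only [Complex.sq_norm, normSq_apply, Complex.inner, sub_re, sub_im, mul_re, mul_im,
      add_re, add_im, ofReal_re, ofReal_im, one_re, one_im, conj_re, conj_im, div_ofReal_re,
      div_ofReal_im]
    field_simp
    ring
  have hcont := continuous_besselClifford_mul (a + 1) w
  have hrpow := Real.continuous_rpow_const (q := a + 1) (by linarith)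
  have hE := continuous_besselEnergy ha w
  have hmono := monotoneOn_Ici_of_hasDerivAt_nonneg (by fun_prop) hderiv
    (fun _ _ => by positivity) self_mem_Ici ht ht
  have h0 : (0 : ℝ) ^ (a + 1) = 0 := Real.zero_rpow (by linarith)
  simpa [besselEnergy, h0] using hmono

lemma besselEnergy_one_le (a : ℝ) (w : ℂ) :
    besselEnergy a w 1 ≤
      ‖w‖ / |w.im| * ‖besselClifford (a + 1) w‖ * ‖besselClifford a w‖ := by
  refine (le_abs_self _).trans ?_
  rw [besselEnergy, Real.one_rpow, one_mul, ofReal_one, one_mul, abs_div]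
  refine (div_le_div_of_nonneg_right (abs_im_le_norm _) (abs_nonneg _)).trans_eq ?_
  rw [norm_mul, norm_mul, RCLike.norm_conj]
  ring

lemma norm_besselClifford_add_one_le (ha : -1 < a) (hw : w.im ≠ 0) :
    ‖besselClifford (a + 1) w‖ ≤ ‖w‖ / ((a + 1) * |w.im|) * ‖besselClifford a w‖ := by
  have ha' : 0 < a + 1 := by linarith
  rcases (norm_nonneg (besselClifford (a + 1) w)).eq_or_lt with h | h
  · rw [← h]
    positivity
  · have hle := (rpow_mul_sq_norm_besselClifford_le_besselEnergy ha hw zero_le_one).trans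
      (besselEnergy_one_le a w)
    rw [Real.one_rpow, one_mul, ofReal_one, one_mul] at hle
    refine le_of_mul_le_mul_left (hle.trans_eq' ?_ |>.trans_eq ?_) (mul_pos ha' h)
    · ring
    · field_simp

lemma rpow_mul_norm_besselClifford_add_one_le (ha : -1 < a) (hw : w.im ≠ 0) {s : ℝ}
    (hs : s ∈ Ioc 0 1) :
    s ^ (a + 1) * ‖besselClifford (a + 1) (s ^ 2 * w)‖ ≤
      ‖w‖ / ((a + 1) * |w.im|) * ‖besselClifford a w‖ := by
  have ha' : 0 < a + 1 := by linarith
  have hs2 : 0 ≤ s ^ 2 := sq_nonneg s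
  have hlower := rpow_mul_sq_norm_besselClifford_le_besselEnergy ha hw hs2
  have hmono := monotoneOn_besselEnergy ha hw hs2 (mem_Ici.2 zero_le_one) (pow_le_one₀ hs.1.le hs.2)
  have hupper : besselEnergy a w 1 ≤ (a + 1) *
      (‖w‖ / ((a + 1) * |w.im|) * ‖besselClifford a w‖) ^ 2 :=
    calc besselEnergy a w 1
        ≤ ‖w‖ / |w.im| * ‖besselClifford (a + 1) w‖ * ‖besselClifford a w‖ :=
          besselEnergy_one_le a w
      _ ≤ ‖w‖ / |w.im| * (‖w‖ / ((a + 1) * |w.im|) * ‖besselClifford a w‖) *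
          ‖besselClifford a w‖ := by
          gcongr
          exact norm_besselClifford_add_one_le ha hw
      _ = _ := by field_simp
  refine le_of_sq_le_sq ?_ (by positivity)
  rw [mul_pow, Real.rpow_pow_comm hs.1.le, ← ofReal_pow]
  exact le_of_mul_le_mul_left (hlower.trans (hmono.trans hupper)) ha'

lemma hasDerivAt_besselClifford_sq_mul (a : ℝ) (w : ℂ) (s : ℝ) :
    HasDerivAt (fun σ : ℝ => besselClifford a (σ ^ 2 * w))
      (2 * s * w * besselClifford (a + 1) (s ^ 2 * w)) s := by
  convert! ((hasDerivAt_besselClifford_mul a w (s ^ 2)).scomp s (hasDerivAt_pow 2 s)) using 1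
  · ext
    simp
  · simp [mul_assoc]

lemma norm_mul_besselClifford_add_one_sq_mul_le {q : ℝ} (ha : -1 < a) (hq : 0 ≤ q) (haq : a ≤ q)
    (hw : w.im ≠ 0) {s σ : ℝ} (hs : 0 < s) (hσ : σ ∈ Icc s 1) :
    ‖2 * σ * w * besselClifford (a + 1) (σ ^ 2 * w)‖ ≤
      2 * ‖w‖ ^ 2 / ((a + 1) * |w.im|) * ‖besselClifford a w‖ * s ^ (-q) := by
  have ha' : 0 < a + 1 := by linarith
  have hσ0 : 0 < σ := hs.trans_le hσ.1
  have hσq : σ ^ (-a) ≤ s ^ (-q) :=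
    (Real.rpow_le_rpow_of_exponent_ge hσ0 hσ.2 (neg_le_neg haq)).trans
      (Real.rpow_le_rpow_of_nonpos hs hσ.1 (neg_nonpos.2 hq))
  have hσa : σ = σ ^ (a + 1) * σ ^ (-a) := by
    rw [← Real.rpow_add hσ0, add_neg_cancel_comm, Real.rpow_one]
  calc ‖2 * σ * w * besselClifford (a + 1) (σ ^ 2 * w)‖
      = 2 * σ * ‖w‖ * ‖besselClifford (a + 1) (σ ^ 2 * w)‖ := by
        rw [norm_mul, norm_mul, norm_mul, norm_ofNat, norm_real, Real.norm_of_nonneg hσ0.le]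
    _ = 2 * (σ ^ (a + 1) * σ ^ (-a)) * ‖w‖ * ‖besselClifford (a + 1) (σ ^ 2 * w)‖ := by
        rw [← hσa]
    _ = 2 * ‖w‖ * (σ ^ (a + 1) * ‖besselClifford (a + 1) (σ ^ 2 * w)‖) * σ ^ (-a) := by ring
    _ ≤ 2 * ‖w‖ * (‖w‖ / ((a + 1) * |w.im|) * ‖besselClifford a w‖) * s ^ (-q) := by
        gcongr 2 * ‖w‖ * ?_ * ?_
        exact rpow_mul_norm_besselClifford_add_one_le ha hw ⟨hσ0, hσ.2⟩
    _ = _ := by ring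

lemma rpow_mul_norm_besselClifford_le {q : ℝ} (ha : -1 < a) (hq : 0 ≤ q) (haq : a ≤ q)
    (hw : w.im ≠ 0) {s : ℝ} (hs : s ∈ Ioc 0 1) :
    s ^ q * ‖besselClifford a (s ^ 2 * w)‖ ≤
      (1 + 2 * ‖w‖ ^ 2 / ((a + 1) * |w.im|)) * ‖besselClifford a w‖ := by
  set M := 2 * ‖w‖ ^ 2 / ((a + 1) * |w.im|) * ‖besselClifford a w‖ with hM
  have hbound (σ : ℝ) (hσ : σ ∈ Icc s 1) :
      ‖2 * σ * w * besselClifford (a + 1) (σ ^ 2 * w)‖ ≤ M * s ^ (-q) :=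
    norm_mul_besselClifford_add_one_sq_mul_le ha hq haq hw hs.1 hσ
  have hmvt := (convex_Icc s 1).norm_image_sub_le_of_norm_hasDerivWithin_le
    (fun σ _ => (hasDerivAt_besselClifford_sq_mul a w σ).hasDerivWithinAt) hbound
    (right_mem_Icc.2 hs.2) (left_mem_Icc.2 hs.2)
  have hlen : ‖s - 1‖ ≤ 1 := by rw [Real.norm_eq_abs, abs_le]; constructor <;> grind
  have hnorm : ‖besselClifford a (s ^ 2 * w)‖ ≤ ‖besselClifford a w‖ + M * s ^ (-q) := by
    have hMs : 0 ≤ M * s ^ (-q) := (norm_nonneg _).trans (hbound 1 (right_mem_Icc.2 hs.2))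
    have := (norm_sub_norm_le _ _).trans (hmvt.trans (mul_le_of_le_one_right hMs hlen))
    rw [ofReal_one, one_pow, one_mul] at this
    linarith
  calc s ^ q * ‖besselClifford a (s ^ 2 * w)‖
      ≤ s ^ q * (‖besselClifford a w‖ + M * s ^ (-q)) := by
        have := Real.rpow_nonneg hs.1.le q
        gcongr
    _ = s ^ q * ‖besselClifford a w‖ + M := by
        have := (Real.rpow_pos_of_pos hs.1 q).ne'
        rw [Real.rpow_neg hs.1.le]
        field_simp
    _ ≤ 1 * ‖besselClifford a w‖ + M := by
        gcongr
        exact Real.rpow_le_one hs.1.le hs.2 hq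
    _ = _ := by rw [hM]; ring

lemma besselClifford_ne_zero_of_im_ne_zero (ha : -1 < a) (hw : w.im ≠ 0) :
    besselClifford a w ≠ 0 := fun h =>
  besselClifford_add_one_ne_zero ha h <| norm_le_zero_iff.1 <| by
    simpa [h] using norm_besselClifford_add_one_le ha hw

end Energy

section Sonine

lemma ofReal_rpow_mul_one_sub_rpow {p q r : ℝ} (hr : r ∈ Ioo 0 1) :
    ((r ^ p * (1 - r) ^ q : ℝ) : ℂ) =
      (r : ℂ) ^ (((p + 1 : ℝ) : ℂ) - 1) * (1 - (r : ℂ)) ^ (((q + 1 : ℝ) : ℂ) - 1) := by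
  simp [ofReal_cpow hr.1.le, ofReal_cpow (sub_nonneg.2 hr.2.le)]

variable {p q : ℝ}

lemma integrableOn_rpow_mul_one_sub_rpow (hp : -1 < p) (hq : -1 < q) :
    IntegrableOn (fun r : ℝ => r ^ p * (1 - r) ^ q) (Ioo 0 1) := by
  have hbeta := betaIntegral_convergent (u := (p + 1 : ℝ)) (v := (q + 1 : ℝ))
    (by rw [ofReal_re]; linarith) (by rw [ofReal_re]; linarith)
  rw [intervalIntegrable_iff_integrableOn_Ioo_of_le zero_le_one] at hbeta
  have hreal :=
    hbeta.congr_fun (fun r hr => (ofReal_rpow_mul_one_sub_rpow hr).symm) measurableSet_Ioo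
  exact hreal.re

lemma integral_rpow_mul_one_sub_rpow (hp : -1 < p) (hq : -1 < q) :
    ∫ r in Ioo (0 : ℝ) 1, r ^ p * (1 - r) ^ q = ProbabilityTheory.beta (p + 1) (q + 1) := by
  rw [ProbabilityTheory.beta_eq_betaIntegralReal _ _ (by linarith) (by linarith), betaIntegral,
    intervalIntegral.integral_of_le zero_le_one, integral_Ioc_eq_integral_Ioo,
    ← setIntegral_congr_fun measurableSet_Ioo fun r hr => ofReal_rpow_mul_one_sub_rpow hr,
    integral_complex_ofReal, ofReal_re]

variable {a b : ℝ} {w : ℂ}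

lemma integral_rpow_mul_one_sub_rpow_mul_pow (ha : -1 < a) (hab : a < b) (k : ℕ) :
    ∫ r in Ioo (0 : ℝ) 1, ((r ^ a * (1 - r) ^ (b - a - 1) : ℝ) : ℂ) * (r : ℂ) ^ k =
      ProbabilityTheory.beta (a + k + 1) (b - a) := by
  have := k.cast_nonneg (α := ℝ)
  have hbeta := integral_rpow_mul_one_sub_rpow (p := a + k) (q := b - a - 1)
    (by linarith) (by linarith)
  rw [sub_add_cancel] at hbeta
  rw [← hbeta, ← integral_complex_ofReal]
  refine setIntegral_congr_fun measurableSet_Ioo fun r hr => ?_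
  simp only [Real.rpow_add hr.1, Real.rpow_natCast]
  push_cast
  ring

lemma integral_mul_besselClifford (ha : -1 < a) (hab : a < b) (w : ℂ) :
    ∫ r in Ioo (0 : ℝ) 1,
        ((r ^ a * (1 - r) ^ (b - a - 1) : ℝ) : ℂ) * besselClifford a (r * w) =
      Real.Gamma (b - a) * besselClifford b w := by
  refine ((hasEntireSeries_besselClifford a).integral_comp_mul
    (W := fun r => ((r ^ a * (1 - r) ^ (b - a - 1) : ℝ) : ℂ)) (ρ := fun r => r)
    measurableSet_Ioo (integrableOn_rpow_mul_one_sub_rpow ha (by linarith)).ofReal continuous_id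
    (fun r hr => (abs_of_pos hr.1).trans_le hr.2.le) w).unique ?_
  convert! ((hasEntireSeries_besselClifford b).const_mul (Real.Gamma (b - a))) w using 3 with k
  have := k.cast_nonneg (α := ℝ)
  have : (Real.Gamma (a + k + 1) : ℂ) ≠ 0 :=
    mod_cast (Real.Gamma_pos_of_pos (by linarith : 0 < a + k + 1)).ne'
  simp only [integral_rpow_mul_one_sub_rpow_mul_pow ha hab, ProbabilityTheory.beta,
    besselCliffordCoeff, show a + k + 1 + (b - a) = b + k + 1 by ring]
  push_cast
  field_simp

lemma rpow_half_mul_norm_besselClifford_le (ha : -1 < a) (hp : 0 ≤ p) (hap : a ≤ p)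
    (hw : w.im ≠ 0) {r x : ℝ} (hr : r ∈ Ioc 0 1) (hx : x ∈ Ioc 0 1) :
    r ^ (p / 2) * ‖besselClifford a (r * (x ^ 2 * w))‖ ≤
      x ^ (-p) * ((1 + 2 * ‖w‖ ^ 2 / ((a + 1) * |w.im|)) * ‖besselClifford a w‖) := by
  have hs : √r * x ∈ Ioc 0 1 :=
    ⟨mul_pos (Real.sqrt_pos.2 hr.1) hx.1,
      mul_le_one₀ (Real.sqrt_le_one.2 hr.2) hx.1.le hx.2⟩
  have hbound := rpow_mul_norm_besselClifford_le ha hp hap hw hs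
  have hsq : ((√r * x : ℝ) : ℂ) ^ 2 * w = r * (x ^ 2 * w) := by
    rw [← ofReal_pow, mul_pow, Real.sq_sqrt hr.1.le]
    push_cast
    ring
  have hpow : (√r * x) ^ p = r ^ (p / 2) * x ^ p := by
    rw [Real.mul_rpow (Real.sqrt_nonneg r) hx.1.le, Real.sqrt_eq_rpow, ← Real.rpow_mul hr.1.le,
      one_div_mul_eq_div]
  rw [hsq, hpow] at hbound
  rw [Real.rpow_neg hx.1.le, inv_mul_eq_div, le_div_iff₀ (Real.rpow_pos_of_pos hx.1 p)]
  linarith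

lemma Gamma_mul_norm_besselClifford_le (ha : -1 < a) (hab : a < b) (hp : 0 ≤ p) (hap : a ≤ p)
    (hpa : p < 2 * (a + 1)) (hw : w.im ≠ 0) {x : ℝ} (hx : x ∈ Ioc 0 1) :
    Real.Gamma (b - a) * ‖besselClifford b (x ^ 2 * w)‖ ≤
      x ^ (-p) * ((1 + 2 * ‖w‖ ^ 2 / ((a + 1) * |w.im|)) * ‖besselClifford a w‖) *
        ProbabilityTheory.beta (a - p / 2 + 1) (b - a) := by
  have hG : 0 < Real.Gamma (b - a) := Real.Gamma_pos_of_pos (sub_pos.2 hab)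
  set S := (1 + 2 * ‖w‖ ^ 2 / ((a + 1) * |w.im|)) * ‖besselClifford a w‖
  have hpoint : ∀ r ∈ Ioo (0 : ℝ) 1,
      ‖((r ^ a * (1 - r) ^ (b - a - 1) : ℝ) : ℂ) * besselClifford a (r * (x ^ 2 * w))‖ ≤
        x ^ (-p) * S * (r ^ (a - p / 2) * (1 - r) ^ (b - a - 1)) := fun r hr => by
    have hweight : 0 ≤ r ^ (a - p / 2) * (1 - r) ^ (b - a - 1) :=
      mul_nonneg (Real.rpow_nonneg hr.1.le _) (Real.rpow_nonneg (sub_nonneg.2 hr.2.le) _)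
    calc ‖((r ^ a * (1 - r) ^ (b - a - 1) : ℝ) : ℂ) * besselClifford a (r * (x ^ 2 * w))‖
        = (r ^ (p / 2) * ‖besselClifford a (r * (x ^ 2 * w))‖) *
            (r ^ (a - p / 2) * (1 - r) ^ (b - a - 1)) := by
          have hsplit : r ^ a = r ^ (p / 2) * r ^ (a - p / 2) := by
            rw [← Real.rpow_add hr.1, add_sub_cancel]
          rw [norm_mul, norm_real, hsplit, mul_assoc, norm_mul, Real.norm_of_nonneg hweight,
            Real.norm_of_nonneg (Real.rpow_nonneg hr.1.le _)]
          ring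
      _ ≤ _ := mul_le_mul_of_nonneg_right
          (rpow_half_mul_norm_besselClifford_le ha hp hap hw ⟨hr.1, hr.2.le⟩ hx) hweight
  have hint := integrableOn_rpow_mul_one_sub_rpow (p := a - p / 2) (q := b - a - 1)
    (by linarith) (by linarith)
  have hle := norm_integral_le_of_norm_le (hint.const_mul (x ^ (-p) * S))
    (ae_restrict_of_forall_mem measurableSet_Ioo hpoint)
  rwa [integral_mul_besselClifford ha hab, norm_mul, norm_real, Real.norm_of_nonneg hG.le,
    integral_const_mul, integral_rpow_mul_one_sub_rpow (by linarith) (by linarith),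
    sub_add_cancel] at hle

lemma exists_rpow_mul_norm_besselClifford_le (ha : -1 < a) (hab : a < b) (hb : 0 ≤ b) :
    ∃ C, 0 ≤ C ∧ ∀ w : ℂ, w.im ≠ 0 → ∀ x ∈ Ioo (0 : ℝ) 1,
      x ^ b * ‖besselClifford b (x ^ 2 * w)‖ ≤
        C * ((1 + 2 * ‖w‖ ^ 2 / ((a + 1) * |w.im|)) * ‖besselClifford a w‖) := by
  set p := max a 0
  have hp2 : p < 2 * (a + 1) := max_lt (by linarith) (by linarith)
  have hG : 0 < Real.Gamma (b - a) := Real.Gamma_pos_of_pos (sub_pos.2 hab)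
  have hB : 0 < ProbabilityTheory.beta (a - p / 2 + 1) (b - a) :=
    ProbabilityTheory.beta_pos (by linarith) (sub_pos.2 hab)
  refine ⟨ProbabilityTheory.beta (a - p / 2 + 1) (b - a) / Real.Gamma (b - a), by positivity,
    fun w hw x hx => ?_⟩
  have hle := Gamma_mul_norm_besselClifford_le ha hab (le_max_right a 0) (le_max_left a 0) hp2 hw
    ⟨hx.1, hx.2.le⟩
  have ha' : 0 < a + 1 := by linarith
  have hxb : x ^ b * x ^ (-p) ≤ 1 := by
    rw [← Real.rpow_add hx.1]
    exact Real.rpow_le_one hx.1.le hx.2.le (by linarith [max_le hab.le hb])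
  rw [div_mul_eq_mul_div, le_div_iff₀ hG]
  calc x ^ b * ‖besselClifford b (x ^ 2 * w)‖ * Real.Gamma (b - a)
      = x ^ b * (Real.Gamma (b - a) * ‖besselClifford b (x ^ 2 * w)‖) := by ring
    _ ≤ x ^ b * _ := mul_le_mul_of_nonneg_left hle (Real.rpow_nonneg hx.1.le b)
    _ = x ^ b * x ^ (-p) * (ProbabilityTheory.beta (a - p / 2 + 1) (b - a) *
          ((1 + 2 * ‖w‖ ^ 2 / ((a + 1) * |w.im|)) * ‖besselClifford a w‖)) := by ring
    _ ≤ _ := mul_le_of_le_one_left (by positivity) hxb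

end Sonine

section EntireFunctions

variable {f g G : ℂ → ℂ} {C : ℝ} {n : ℕ}

lemma differentiable_dslope (hf : Differentiable ℂ f) (z : ℂ) : Differentiable ℂ (dslope f z) :=
  differentiableOn_univ.1 ((differentiableOn_dslope univ_mem).2 hf.differentiableOn)

lemma dslope_div_dslope_of_ne {z u : ℂ} (hf : f z = 0) (hg : g z = 0) (hu : u ≠ z) :
    dslope f z u / dslope g z u = f u / g u := by
  rw [dslope_of_ne _ hu, dslope_of_ne _ hu, slope_def_field, slope_def_field, hf, hg, sub_zero,
    sub_zero, div_div_div_cancel_right₀ (sub_ne_zero.2 hu)]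

lemma exists_differentiable_eq_mul (hf : Differentiable ℂ f) (hg : Differentiable ℂ g)
    (hzero : ∀ z, g z = 0 → f z = 0) (hsimple : ∀ z, g z = 0 → deriv g z ≠ 0) :
    ∃ G : ℂ → ℂ, Differentiable ℂ G ∧ ∀ z, f z = G z * g z := by
  classical
  refine ⟨fun z => if g z = 0 then deriv f z / deriv g z else f z / g z, fun z => ?_, fun z => ?_⟩
  · by_cases hz : g z = 0
    · have hslope : dslope g z z ≠ 0 := by rw [dslope_same]; exact hsimple z hz
      have hcont := (differentiable_dslope hg z).continuous.continuousAt.eventually_ne hslope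
      refine (((differentiable_dslope hf z) z).div ((differentiable_dslope hg z) z)
        hslope).congr_of_eventuallyEq ?_
      filter_upwards [hcont] with u hu
      rcases eq_or_ne u z with rfl | huz
      · simp [hz, dslope_same]
      · have hgu : g u ≠ 0 := fun h => hu <| by
          rw [dslope_of_ne _ huz, slope_def_field, h, hz, sub_zero, zero_div]
        rw [if_neg hgu, Pi.div_apply, dslope_div_dslope_of_ne (hzero z hz) hz huz]
    · refine ((hf z).div (hg z) hz).congr_of_eventuallyEq ?_
      filter_upwards [(hg z).continuousAt.eventually_ne hz] with u hu
      rw [if_neg hu, Pi.div_apply]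
  · by_cases hz : g z = 0
    · rw [hz, mul_zero, hzero z hz]
    · simp only [hz, if_false, div_mul_cancel₀ _ hz]

lemma norm_sq_sub_norm_sq (z : ℂ) : ‖z ^ 2 - (‖z‖ : ℂ) ^ 2‖ = 2 * ‖z‖ * |z.im| := by
  rw [← conj_mul', sq, ← sub_mul, sub_conj]
  simp [mul_right_comm]

-- The maximum principle for `(z ^ 2 - R ^ 2) * G z` on the disc of radius `R = 2 * (1 + ‖w‖)`.
lemma norm_le_of_abs_im_mul_norm_le (hG : Differentiable ℂ G)
    (hbound : ∀ w, |w.im| * ‖G w‖ ≤ C * (1 + ‖w‖) ^ (n + 1)) (w : ℂ) :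
    ‖G w‖ ≤ 3 ^ (n + 2) * C * (1 + ‖w‖) ^ n := by
  have hC : 0 ≤ C := by
    simpa using (mul_nonneg (abs_nonneg _) (norm_nonneg _)).trans (hbound 0)
  set R : ℝ := 2 * (1 + ‖w‖) with hR
  have hw := norm_nonneg w
  have hR0 : 0 < R := by positivity
  have hsphere : ∀ z ∈ frontier (Metric.ball (0 : ℂ) R),
      ‖(z ^ 2 - (R : ℂ) ^ 2) * G z‖ ≤ 2 * R * (C * (1 + R) ^ (n + 1)) := fun z hz => by
    rw [frontier_ball _ hR0.ne', mem_sphere_zero_iff_norm] at hz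
    rw [norm_mul, ← hz, norm_sq_sub_norm_sq, mul_assoc]
    exact mul_le_mul_of_nonneg_left (hbound z) (by positivity)
  have hmax := norm_le_of_forall_mem_frontier_norm_le Metric.isBounded_ball
    (by fun_prop : Differentiable ℂ fun z => (z ^ 2 - (R : ℂ) ^ 2) * G z).diffContOnCl hsphere
    (z := w) (subset_closure (by rw [mem_ball_zero_iff]; linarith))
  have hfactor : 3 / 4 * R ^ 2 ≤ ‖w ^ 2 - (R : ℂ) ^ 2‖ := by
    have := norm_sub_norm_le ((R : ℂ) ^ 2) (w ^ 2)
    rw [norm_sub_rev, norm_pow, norm_pow, norm_real, Real.norm_of_nonneg hR0.le] at this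
    nlinarith
  have hle : 3 / 4 * R ^ 2 * ‖G w‖ ≤ 2 * R * (C * (3 * (1 + ‖w‖)) ^ (n + 1)) :=
    calc 3 / 4 * R ^ 2 * ‖G w‖ ≤ ‖w ^ 2 - (R : ℂ) ^ 2‖ * ‖G w‖ := by gcongr
      _ ≤ 2 * R * (C * (1 + R) ^ (n + 1)) := by rwa [← norm_mul]
      _ ≤ 2 * R * (C * (3 * (1 + ‖w‖)) ^ (n + 1)) := by gcongr; linarith
  refine le_of_mul_le_mul_left (hle.trans ?_) (by positivity : 0 < 3 / 4 * R ^ 2)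
  rw [hR, mul_pow, pow_succ (1 + ‖w‖) n, pow_succ 3 (n + 1)]
  have : 0 ≤ (1 + ‖w‖) ^ 2 * (3 ^ (n + 1) * C * (1 + ‖w‖) ^ n) := by positivity
  linarith

lemma iteratedDeriv_eq_zero_of_norm_le (hG : Differentiable ℂ G)
    (hbound : ∀ w, ‖G w‖ ≤ C * (1 + ‖w‖) ^ n) {k : ℕ} (hk : n < k) :
    iteratedDeriv k G 0 = 0 := by
  have hlim : Tendsto (fun R : ℝ => k ! * (C * (1 + R) ^ n) / R ^ k) atTop (𝓝 0) := by
    have h1 : Tendsto (fun R : ℝ => (1 + R) / R) atTop (𝓝 1) := by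
      refine (tendsto_inv_atTop_zero.const_add 1).congr' ?_ |>.trans (by simp)
      filter_upwards [eventually_ne_atTop 0] with R hR
      field_simp
      ring
    have h2 := ((tendsto_inv_atTop_zero (𝕜 := ℝ)).pow (k - n)).mul (h1.pow n)
    rw [zero_pow (by lia), zero_mul] at h2
    refine (h2.const_mul (k ! * C)).congr' ?_ |>.trans (by simp)
    filter_upwards [eventually_ne_atTop 0] with R hR
    have hsplit : R ^ k = R ^ (k - n) * R ^ n := by rw [← pow_add, Nat.sub_add_cancel hk.le]
    rw [hsplit, div_pow, inv_pow]
    field_simp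
  refine norm_le_zero_iff.1 (ge_of_tendsto hlim ?_)
  filter_upwards [eventually_gt_atTop 0] with R hR
  refine norm_iteratedDeriv_le_of_forall_mem_sphere_norm_le k hR hG.diffContOnCl fun z hz => ?_
  simpa [mem_sphere_zero_iff_norm.1 hz] using hbound z

lemma eq_add_mul_of_abs_im_mul_norm_le (hG : Differentiable ℂ G)
    (hbound : ∀ w, |w.im| * ‖G w‖ ≤ C * (1 + ‖w‖) ^ 2) :
    ∃ c₀ c₁ : ℂ, ∀ w, G w = c₀ + c₁ * w := by
  refine ⟨iteratedDeriv 0 G 0 / 0 !, iteratedDeriv 1 G 0 / 1 !, fun w => ?_⟩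
  have hsum : HasSum (fun k => iteratedDeriv k G 0 / k ! * w ^ k)
      (∑ k ∈ Finset.range 2, iteratedDeriv k G 0 / k ! * w ^ k) :=
    hasSum_sum_of_ne_finset_zero fun k hk => by
      rw [iteratedDeriv_eq_zero_of_norm_le hG (norm_le_of_abs_im_mul_norm_le (n := 1) hG hbound)
        (by simpa using hk), zero_div, zero_mul]
  rw [(HasEntireSeries.of_differentiable hG w).unique hsum, Finset.sum_range_succ,
    Finset.sum_range_one, pow_zero, pow_one, mul_one]

end EntireFunctions

section Moments

variable {z : ℝ → ℝ}

lemma integrableOn_Ioo_mul_of_continuous {g : ℝ → ℝ} {a b : ℝ} (hz : IntegrableOn z (Ioo a b))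
    (hg : Continuous g) : IntegrableOn (fun x => z x * g x) (Ioo a b) :=
  (((integrableOn_Icc_iff_integrableOn_Ioo).2 hz).mul_continuousOn hg.continuousOn
    isCompact_Icc).mono_set Ioo_subset_Icc_self

lemma tendsto_integral_mul_sq_pow (hz : IntegrableOn z (Ioo 0 1)) :
    Tendsto (fun k : ℕ => ∫ x in Ioo (0 : ℝ) 1, z x * (x ^ 2) ^ k) atTop (𝓝 0) := by
  have hlim := tendsto_integral_of_dominated_convergence (μ := volume.restrict (Ioo (0 : ℝ) 1))
    (F := fun k x => z x * (x ^ 2) ^ k) (f := 0) (fun x => ‖z x‖)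
    (fun k => (integrableOn_Ioo_mul_of_continuous hz (by fun_prop)).aestronglyMeasurable) hz.norm
    (fun k => ae_restrict_of_forall_mem measurableSet_Ioo fun x hx => ?_)
    (ae_restrict_of_forall_mem measurableSet_Ioo fun x hx => ?_)
  · simpa using hlim
  · rw [norm_mul, norm_pow, norm_pow, Real.norm_of_nonneg hx.1.le]
    exact mul_le_of_le_one_right (norm_nonneg _)
      (pow_le_one₀ (by positivity) (pow_le_one₀ hx.1.le hx.2.le))
  · simpa using (tendsto_pow_atTop_nhds_zero_of_lt_one (sq_nonneg x)
      (pow_lt_one₀ hx.1.le hx.2 two_ne_zero)).const_mul (z x)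

lemma integral_mul_eval_sq_eq_zero (hz : IntegrableOn z (Ioo 0 1))
    (hmoment : ∀ k : ℕ, ∫ x in Ioo (0 : ℝ) 1, z x * (x ^ 2) ^ k = 0) (p : Polynomial ℝ) :
    ∫ x in Ioo (0 : ℝ) 1, z x * p.eval (x ^ 2) = 0 := by
  induction p using Polynomial.induction_on' with
  | add p q hp hq =>
    simp only [Polynomial.eval_add, mul_add]
    rw [integral_add (integrableOn_Ioo_mul_of_continuous hz (by fun_prop))
      (integrableOn_Ioo_mul_of_continuous hz (by fun_prop)), hp, hq, add_zero]
  | monomial k c =>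
    simp only [Polynomial.eval_monomial, mul_left_comm _ c]
    rw [integral_const_mul, hmoment, mul_zero]

lemma integral_mul_eq_zero_of_continuous (hz : IntegrableOn z (Ioo 0 1))
    (hmoment : ∀ k : ℕ, ∫ x in Ioo (0 : ℝ) 1, z x * (x ^ 2) ^ k = 0) {g : ℝ → ℝ}
    (hg : Continuous g) : ∫ x in Ioo (0 : ℝ) 1, z x * g x = 0 := by
  set I := ∫ x in Ioo (0 : ℝ) 1, ‖z x‖
  have happrox (ε : ℝ) (hε : 0 < ε) : ‖∫ x in Ioo (0 : ℝ) 1, z x * g x‖ ≤ ε * I := by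
    obtain ⟨p, hp⟩ := exists_polynomial_near_of_continuousOn 0 1 (fun t => g √t) (by fun_prop) ε hε
    have hsub : ∫ x in Ioo (0 : ℝ) 1, z x * g x =
        ∫ x in Ioo (0 : ℝ) 1, z x * (g x - p.eval (x ^ 2)) := by
      simp only [mul_sub]
      rw [integral_sub (integrableOn_Ioo_mul_of_continuous hz hg)
        (integrableOn_Ioo_mul_of_continuous hz (by fun_prop)),
        integral_mul_eval_sq_eq_zero hz hmoment, sub_zero]
    rw [hsub, ← integral_const_mul]
    refine norm_integral_le_of_norm_le (hz.norm.const_mul _)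
      (ae_restrict_of_forall_mem measurableSet_Ioo fun x hx => ?_)
    have hpx := hp (x ^ 2) ⟨sq_nonneg x, pow_le_one₀ hx.1.le hx.2.le⟩
    rw [Real.sqrt_sq hx.1.le, abs_sub_comm] at hpx
    rw [norm_mul, mul_comm]
    exact mul_le_mul_of_nonneg_right hpx.le (norm_nonneg _)
  have hlim : Tendsto (fun ε => ε * I) (𝓝[>] 0) (𝓝 0) :=
    ((continuous_mul_const I).tendsto' 0 0 (zero_mul I)).mono_left nhdsWithin_le_nhds
  exact norm_le_zero_iff.1 (ge_of_tendsto hlim (eventually_mem_nhdsWithin.mono happrox))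

lemma ae_eq_zero_of_integral_mul_sq_pow_eq_zero (hz : IntegrableOn z (Ioo 0 1))
    (hmoment : ∀ k : ℕ, ∫ x in Ioo (0 : ℝ) 1, z x * (x ^ 2) ^ k = 0) :
    ∀ᵐ x ∂volume.restrict (Ioo (0 : ℝ) 1), z x = 0 := by
  rw [ae_restrict_iff' measurableSet_Ioo]
  refine isOpen_Ioo.ae_eq_zero_of_integral_contDiff_smul_eq_zero hz.locallyIntegrableOn
    fun g hg _ hsupp => ?_
  rw [← integral_mul_eq_zero_of_continuous hz hmoment hg.continuous,
    ← setIntegral_eq_integral_of_forall_compl_eq_zero (s := Ioo (0 : ℝ) 1)]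
  · simp only [smul_eq_mul, mul_comm]
  · intro x hx
    rw [image_eq_zero_of_notMem_tsupport fun h => hx (hsupp h), zero_smul]

end Moments

section Completeness

variable {a b : ℝ} {y : ℝ → ℝ}

/-- The entire function `w ↦ ∫₀¹ y(x) xᵇ C_b(x² w) dx`. At `w = -(s / 2)²` it is, up to the factor
`(s / 2)ᵇ`, the finite Hankel transform `∫₀¹ y(x) J_b(x s) dx`. -/
noncomputable def finiteHankel (b : ℝ) (y : ℝ → ℝ) (w : ℂ) : ℂ :=
  ∫ x in Ioo (0 : ℝ) 1, ((y x * x ^ b : ℝ) : ℂ) * besselClifford b (x ^ 2 * w)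

lemma integrableOn_mul_rpow (hb : 0 ≤ b) (hy : IntegrableOn y (Ioo 0 1)) :
    IntegrableOn (fun x => y x * x ^ b) (Ioo 0 1) :=
  integrableOn_Ioo_mul_of_continuous hy (Real.continuous_rpow_const hb)

lemma hasEntireSeries_finiteHankel (hb : 0 ≤ b) (hy : IntegrableOn y (Ioo 0 1)) :
    HasEntireSeries (finiteHankel b y) fun k =>
      ((besselCliffordCoeff b k * ∫ x in Ioo (0 : ℝ) 1, y x * x ^ b * (x ^ 2) ^ k : ℝ) : ℂ) := by
  have hseries := (hasEntireSeries_besselClifford b).integral_comp_mul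
    (W := fun x => ((y x * x ^ b : ℝ) : ℂ)) (ρ := fun x => x ^ 2) measurableSet_Ioo
    (integrableOn_mul_rpow hb hy).ofReal (by fun_prop) fun x hx => by
      rw [abs_sq]
      exact pow_le_one₀ hx.1.le hx.2.le
  convert! hseries using 1
  · ext w
    simp only [finiteHankel, ofReal_pow]
  · ext k
    rw [ofReal_mul, ← integral_complex_ofReal]
    simp only [ofReal_mul, ofReal_pow]

lemma rpow_mul_finiteHankel_neg_sq (b : ℝ) (y : ℝ → ℝ) {s : ℝ} (hs : 0 < s) :
    ((s / 2) ^ b : ℝ) * finiteHankel b y (-(s / 2) ^ 2) =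
      ((∫ x in Ioo (0 : ℝ) 1, y x * besselJ b (x * s) : ℝ) : ℂ) := by
  rw [finiteHankel, ← integral_const_mul, ← integral_complex_ofReal]
  refine setIntegral_congr_fun measurableSet_Ioo fun x hx => ?_
  have hpow : (x * s / 2) ^ b = x ^ b * (s / 2) ^ b := by
    rw [mul_div_assoc, Real.mul_rpow hx.1.le (by positivity)]
  have harg : -(((x * s : ℝ) : ℂ) / 2) ^ 2 = x ^ 2 * -(s / 2) ^ 2 := by
    push_cast
    ring
  simp only [ofReal_mul (y x) (besselJ b _),
    besselJ_eq_rpow_mul_besselClifford b (mul_pos hx.1 hs), hpow, harg]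
  push_cast
  ring

lemma exists_besselJ_eq_zero_of_besselClifford_eq_zero (ha : -1 < a) {w : ℂ}
    (hw : besselClifford a w = 0) : ∃ s : ℝ, 0 < s ∧ besselJ a s = 0 ∧ w = -(s / 2) ^ 2 := by
  have him : w.im = 0 := not_imp_comm.1 (besselClifford_ne_zero_of_im_ne_zero ha) (not_not.2 hw)
  lift w to ℝ using him with t
  have ht : t < 0 := not_le.1 fun ht => besselClifford_ofReal_ne_zero ha ht hw
  have hsq : (t : ℂ) = -((2 * √(-t) : ℝ) / 2) ^ 2 := by
    rw [ofReal_mul, ofReal_ofNat, mul_div_cancel_left₀ _ two_ne_zero, ← ofReal_pow,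
      Real.sq_sqrt (by linarith), ofReal_neg, neg_neg]
  have hs : 0 < 2 * √(-t) := by
    have := Real.sqrt_pos.2 (neg_pos.2 ht)
    positivity
  refine ⟨2 * √(-t), hs, ?_, hsq⟩
  rw [← ofReal_eq_zero, besselJ_eq_rpow_mul_besselClifford a hs, ← hsq, hw, mul_zero]

lemma finiteHankel_eq_zero (ha : -1 < a)
    (hvanish : ∀ s, 0 < s → besselJ a s = 0 → ∫ x in Ioo (0 : ℝ) 1, y x * besselJ b (x * s) = 0)
    {w : ℂ} (hw : besselClifford a w = 0) : finiteHankel b y w = 0 := by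
  obtain ⟨s, hs, hzero, rfl⟩ := exists_besselJ_eq_zero_of_besselClifford_eq_zero ha hw
  have hprod := rpow_mul_finiteHankel_neg_sq b y hs
  rw [hvanish s hs hzero, ofReal_zero, mul_eq_zero, ofReal_eq_zero] at hprod
  exact hprod.resolve_left (by positivity)

lemma norm_finiteHankel_le (hy : IntegrableOn y (Ioo 0 1)) {w : ℂ} {S : ℝ}
    (hS : ∀ x ∈ Ioo (0 : ℝ) 1, x ^ b * ‖besselClifford b (x ^ 2 * w)‖ ≤ S) :
    ‖finiteHankel b y w‖ ≤ (∫ x in Ioo (0 : ℝ) 1, ‖y x‖) * S := by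
  rw [← integral_mul_const]
  refine norm_integral_le_of_norm_le (hy.norm.mul_const S)
    (ae_restrict_of_forall_mem measurableSet_Ioo fun x hx => ?_)
  rw [norm_mul, norm_real, norm_mul, Real.norm_of_nonneg (Real.rpow_nonneg hx.1.le b), mul_assoc]
  exact mul_le_mul_of_nonneg_left (hS x hx) (norm_nonneg _)

lemma exists_abs_im_mul_norm_finiteHankel_le (ha : -1 < a) (hab : a < b) (hb : 0 ≤ b)
    (hy : IntegrableOn y (Ioo 0 1)) :
    ∃ C, 0 ≤ C ∧ ∀ w : ℂ,
      |w.im| * ‖finiteHankel b y w‖ ≤ C * (1 + ‖w‖) ^ 2 * ‖besselClifford a w‖ := by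
  obtain ⟨C, hC, hbound⟩ := exists_rpow_mul_norm_besselClifford_le ha hab hb
  have ha' : 0 < a + 1 := by linarith
  have : 0 ≤ ∫ x in Ioo (0 : ℝ) 1, ‖y x‖ := integral_nonneg fun _ => norm_nonneg _
  refine ⟨(∫ x in Ioo (0 : ℝ) 1, ‖y x‖) * C * (1 + 2 / (a + 1)), by positivity, fun w => ?_⟩
  rcases eq_or_ne w.im 0 with hw | hw
  · rw [hw, abs_zero, zero_mul]
    positivity
  have hgrowth : |w.im| * (1 + 2 * ‖w‖ ^ 2 / ((a + 1) * |w.im|)) ≤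
      (1 + 2 / (a + 1)) * (1 + ‖w‖) ^ 2 :=
    calc |w.im| * (1 + 2 * ‖w‖ ^ 2 / ((a + 1) * |w.im|))
        = |w.im| + 2 / (a + 1) * ‖w‖ ^ 2 := by field_simp
      _ ≤ (1 + ‖w‖) ^ 2 + 2 / (a + 1) * (1 + ‖w‖) ^ 2 := by
          gcongr
          · nlinarith [abs_im_le_norm w, norm_nonneg w]
          · linarith
      _ = _ := by ring
  calc |w.im| * ‖finiteHankel b y w‖
      ≤ |w.im| * ((∫ x in Ioo (0 : ℝ) 1, ‖y x‖) * _) :=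
        mul_le_mul_of_nonneg_left (norm_finiteHankel_le hy (hbound w hw)) (abs_nonneg _)
    _ = (∫ x in Ioo (0 : ℝ) 1, ‖y x‖) * C *
          (|w.im| * (1 + 2 * ‖w‖ ^ 2 / ((a + 1) * |w.im|))) * ‖besselClifford a w‖ := by ring
    _ ≤ (∫ x in Ioo (0 : ℝ) 1, ‖y x‖) * C * ((1 + 2 / (a + 1)) * (1 + ‖w‖) ^ 2) *
          ‖besselClifford a w‖ := by gcongr
    _ = _ := by ring

lemma exists_finiteHankel_eq_add_mul_mul (ha : -1 < a) (hab : a < b) (hb : 0 ≤ b)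
    (hy : IntegrableOn y (Ioo 0 1)) (hzero : ∀ w, besselClifford a w = 0 → finiteHankel b y w = 0) :
    ∃ c₀ c₁ : ℂ, ∀ w, finiteHankel b y w = (c₀ + c₁ * w) * besselClifford a w := by
  obtain ⟨G, hG, hquot⟩ := exists_differentiable_eq_mul
    (hasEntireSeries_finiteHankel hb hy).differentiable (differentiable_besselClifford a) hzero
    fun w hw => deriv_besselClifford a ▸ besselClifford_add_one_ne_zero ha hw
  obtain ⟨C, hC, hbound⟩ := exists_abs_im_mul_norm_finiteHankel_le ha hab hb hy
  obtain ⟨c₀, c₁, hlin⟩ := eq_add_mul_of_abs_im_mul_norm_le (C := C) hG fun w => by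
    rcases eq_or_ne w.im 0 with hw | hw
    · rw [hw, abs_zero, zero_mul]
      positivity
    · have hle := hbound w
      rw [hquot, norm_mul, ← mul_assoc] at hle
      exact le_of_mul_le_mul_right hle
        (norm_pos_iff.2 (besselClifford_ne_zero_of_im_ne_zero ha hw))
  exact ⟨c₀, c₁, fun w => by rw [hquot, hlin]⟩

lemma eq_zero_of_tendsto_add_mul {u : ℕ → ℝ} {c₀ c₁ : ℂ} (hu : Tendsto u atTop atTop)
    (h : Tendsto (fun k => c₀ + c₁ * u k) atTop (𝓝 0)) : c₀ = 0 ∧ c₁ = 0 := by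
  have hinv : Tendsto (fun k => ((u k)⁻¹ : ℂ)) atTop (𝓝 0) := by
    simpa [Function.comp_def] using
      (continuous_ofReal.tendsto' 0 0 ofReal_zero).comp (tendsto_inv_atTop_zero.comp hu)
  have hc₁ : c₁ = 0 := by
    have hlim := (h.mul hinv).sub (hinv.const_mul c₀)
    rw [mul_zero, mul_zero, sub_zero] at hlim
    refine tendsto_nhds_unique (tendsto_const_nhds.congr' ?_) hlim
    filter_upwards [hu.eventually_ne_atTop 0] with k hk
    have : (u k : ℂ) ≠ 0 := mod_cast hk
    field_simp
    ring
  subst hc₁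
  simp only [zero_mul, add_zero] at h
  exact ⟨tendsto_const_nhds_iff.1 h, rfl⟩

lemma besselCliffordCoeff_eq_mul_succ (a : ℝ) (k : ℕ) :
    besselCliffordCoeff a k = (k + 1) * (a + k + 1) * besselCliffordCoeff a (k + 1) := by
  rw [← besselCliffordCoeff_add_one_order, ← add_one_mul_besselCliffordCoeff_add_one]
  ring

lemma tendsto_mul_div_besselCliffordCoeff {m : ℕ → ℝ} (ha : -1 < a) (hab : a ≤ b)
    (hm : Tendsto m atTop (𝓝 0)) :
    Tendsto (fun k => besselCliffordCoeff b k * m k / besselCliffordCoeff a k) atTop (𝓝 0) := by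
  refine squeeze_zero_norm' ?_ (tendsto_zero_iff_norm_tendsto_zero.1 hm)
  filter_upwards [besselCliffordCoeff_eventually_le hab] with k hk
  have hpos : 0 < besselCliffordCoeff a k := besselCliffordCoeff_pos ha
  have hpos' : 0 < besselCliffordCoeff b k := besselCliffordCoeff_pos (by linarith)
  rw [norm_div, norm_mul, Real.norm_of_nonneg hpos.le, Real.norm_of_nonneg hpos'.le,
    div_le_iff₀ hpos, mul_comm]
  exact mul_le_mul_of_nonneg_left hk (norm_nonneg _)

lemma coeff_eq_zero_of_add_mul_besselClifford {f : ℂ → ℂ} {m : ℕ → ℝ} {c₀ c₁ : ℂ} (ha : -1 < a)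
    (hab : a ≤ b) (hm : Tendsto m atTop (𝓝 0))
    (hf : HasEntireSeries f fun k => ((besselCliffordCoeff b k * m k : ℝ) : ℂ))
    (hlin : ∀ w, f w = (c₀ + c₁ * w) * besselClifford a w) (k : ℕ) : m k = 0 := by
  have hC := hasEntireSeries_besselClifford a
  have hcoeff := hf.coeff_unique <| by
    convert! (hC.const_mul c₀).add (hC.id_mul.const_mul c₁) using 1
    ext w
    rw [hlin]
    ring
  have hratio (k : ℕ) : ((besselCliffordCoeff b (k + 1) * m (k + 1) /
      besselCliffordCoeff a (k + 1) : ℝ) : ℂ) = c₀ + c₁ * ((k + 1) * (a + k + 1) : ℝ) := by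
    have hne : (besselCliffordCoeff a (k + 1) : ℂ) ≠ 0 :=
      mod_cast (besselCliffordCoeff_pos ha).ne'
    rw [ofReal_div, congr_fun hcoeff (k + 1), div_eq_iff hne]
    simp only [besselCliffordCoeff_eq_mul_succ a k]
    push_cast
    ring
  have hu : Tendsto (fun k : ℕ => ((k : ℝ) + 1) * (a + k + 1)) atTop atTop :=
    (tendsto_atTop_add_const_right _ _ tendsto_natCast_atTop_atTop).atTop_mul_atTop₀
      (tendsto_atTop_add_const_right _ _ (tendsto_atTop_add_const_left _ _
        tendsto_natCast_atTop_atTop))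
  have hlim : Tendsto (fun k : ℕ => c₀ + c₁ * ((k + 1) * (a + k + 1) : ℝ)) atTop (𝓝 0) := by
    simp only [← hratio]
    exact (continuous_ofReal.tendsto' 0 0 ofReal_zero).comp
      ((tendsto_mul_div_besselCliffordCoeff ha hab hm).comp (tendsto_add_atTop_nat 1))
  obtain ⟨rfl, rfl⟩ := eq_zero_of_tendsto_add_mul hu hlim
  have hk := congr_fun hcoeff k
  simp only [zero_mul, add_zero, ofReal_eq_zero] at hk
  exact (mul_eq_zero.1 hk).resolve_left
    (besselCliffordCoeff_pos (by linarith : -1 < b)).ne'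

theorem stmt12_general {α ν : ℝ} (hα : -1 < α) (hαν : α < ν) (hν : 0 ≤ ν) {y : ℝ → ℝ}
    (hy : IntegrableOn y (Ioo (0 : ℝ) 1))
    (hvanish : ∀ s, 0 < s → besselJ α s = 0 →
      ∫ x in Ioo (0 : ℝ) 1, y x * besselJ ν (x * s) = 0) :
    ∀ᵐ x ∂volume.restrict (Ioo (0 : ℝ) 1), y x = 0 := by
  have hz := integrableOn_mul_rpow hν hy
  obtain ⟨c₀, c₁, hlin⟩ := exists_finiteHankel_eq_add_mul_mul hα hαν hν hy
    fun _ => finiteHankel_eq_zero hα hvanish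
  have hmoment := coeff_eq_zero_of_add_mul_besselClifford hα hαν.le
    (tendsto_integral_mul_sq_pow hz) (hasEntireSeries_finiteHankel hν hy) hlin
  filter_upwards [ae_eq_zero_of_integral_mul_sq_pow_eq_zero hz hmoment,
    ae_restrict_mem measurableSet_Ioo] with x hzx hx
  exact (mul_eq_zero.1 hzx).resolve_right (Real.rpow_pos_of_pos hx.1 ν).ne'

end Completeness

/-- For `0 < α < ν`, the sequence `{J_ν(x j_{n,α})}` is complete in `L¹(0,1)`. -/
theorem stmt12 (α ν : ℝ) (hα : 0 < α) (hαν : α < ν)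
    (j : ℕ → ℝ) (hj_mono : StrictMono j) (hj_pos : ∀ n, 0 < j n)
    (hj_zero : ∀ n, besselJ α (j n) = 0)
    (hj_all : ∀ x : ℝ, 0 < x → besselJ α x = 0 → ∃ n, j n = x)
    (y : ℝ → ℝ) (hy : IntegrableOn y (Set.Ioo (0 : ℝ) 1))
    (hvanish : ∀ n, ∫ x in Set.Ioo (0 : ℝ) 1, y x * besselJ ν (x * j n) = 0) :
    ∀ᵐ x ∂(volume.restrict (Set.Ioo (0 : ℝ) 1)), y x = 0 :=
  stmt12_general (by linarith) hαν (hα.trans hαν).le hy fun s hs hzero =>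
    (hj_all s hs hzero).elim fun n hn => hn ▸ hvanish n
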